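/- arXiv:1307.3384 — 3 statements merged into one kernel-verified Lean document; each statement's English description precedes it below -/
import Mathlib

section
/- Let r : ℕ → (0,1) be a function of the final time T with T·r(T) → ∞ as T → ∞, and let p^{(T)}_T be the law at time T of the lazy random walk with rate r(T). Then L_T/√(T·r(T)) converges weakly to the standard normal distribution N(0,1); concretely, for every bounded continuous function g : ℝ → ℝ, Σ_{x∈ℤ} p^{(T)}_T(x) · g(x/√(T·r(T))) → (1/√(2π)) ∫_ℝ g(x) e^{−x²/2} dx as T → ∞. -/
open scoped Real
open Filter Topology

/-- The lazy random walk on `ℤ` with movement rate `r`: probability mass function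
at time `m`, started at the origin. -/
noncomputable def lazyRW (r : ℝ) : ℕ → ℤ → ℝ
  | 0, x => if x = 0 then 1 else 0
  | m + 1, x =>
      (1 - r) * lazyRW r m x + (r / 2) * (lazyRW r m (x - 1) + lazyRW r m (x + 1))

/-! Conditioning on the last step shows that the Laurent generating function of `lazyRW r m` is
`((1 - r) + r / 2 * (z + z⁻¹)) ^ m`. At `z = 1` this is the total mass, and at `z = exp (i t)` it is
the characteristic function `(1 + r (cos t - 1)) ^ m`. Rescaling by `√(T r)` replaces `t` by
`t / √(T r)`, and `T r (cos (t / √(T r)) - 1) → -t² / 2` because `T r → ∞`; hence the `T`-th powers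
converge to `exp (-t² / 2)`, the characteristic function of `N(0, 1)`, and Lévy's continuity theorem
applies. -/

open MeasureTheory ProbabilityTheory

lemma lazyRW_nonneg {r : ℝ} (hr : r ∈ Set.Icc 0 1) (m : ℕ) (x : ℤ) : 0 ≤ lazyRW r m x := by
  induction m generalizing x with
  | zero =>
    rw [lazyRW]
    split_ifs <;> norm_num
  | succ m ih =>
    exact add_nonneg (mul_nonneg (sub_nonneg.2 hr.2) (ih x))
      (mul_nonneg (div_nonneg hr.1 zero_le_two) (add_nonneg (ih (x - 1)) (ih (x + 1))))

section GeneratingFunction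

variable {K : Type*} [DivisionRing K] [TopologicalSpace K] [IsTopologicalSemiring K] [Algebra ℝ K]
  {z : K}

lemma hasSum_comp_sub_smul_zpow (hz : z ≠ 0) {a : ℤ → ℝ} {S : K}
    (h : HasSum (fun x : ℤ ↦ a x • z ^ x) S) (k : ℤ) :
    HasSum (fun x : ℤ ↦ a (x - k) • z ^ x) (S * z ^ k) := by
  simpa [Function.comp_def, ← zpow_add₀ hz] using
    ((Equiv.subRight k).hasSum_iff.2 h).mul_right (z ^ k)

lemma hasSum_lazyRW_smul_zpow [ContinuousConstSMul ℝ K] (r : ℝ) (m : ℕ) (hz : z ≠ 0) :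
    HasSum (fun x : ℤ ↦ lazyRW r m x • z ^ x) (((1 - r) • 1 + (r / 2) • (z + z⁻¹)) ^ m) := by
  induction m with
  | zero =>
    have hsupport (x : ℤ) (hx : x ≠ 0) : lazyRW r 0 x • z ^ x = 0 := by simp [lazyRW, hx]
    simpa [lazyRW] using hasSum_single 0 hsupport
  | succ m ih =>
    have hright := hasSum_comp_sub_smul_zpow hz ih 1
    have hleft := hasSum_comp_sub_smul_zpow hz ih (-1)
    convert (ih.const_smul (1 - r)).add ((hright.add hleft).const_smul (r / 2)) using 1
    · funext x
      rw [lazyRW, sub_neg_eq_add]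
      module
    · rw [zpow_one, zpow_neg_one, pow_succ, mul_add, mul_smul_comm, mul_smul_comm, mul_one,
        mul_add]

end GeneratingFunction

lemma hasSum_lazyRW (r : ℝ) (m : ℕ) : HasSum (lazyRW r m) 1 := by
  have hmass : 1 - r + r / 2 * (1 + 1) = 1 := by ring
  simpa [hmass] using hasSum_lazyRW_smul_zpow r m (one_ne_zero' ℝ)

/-- The law of the lazy random walk with movement rate `r` after `m` steps; taking `r` in
`unitInterval` is what makes `lazyRW r m` a probability mass function. -/
noncomputable def lazyRWPMF (r : unitInterval) (m : ℕ) : PMF ℤ :=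
  ⟨fun x ↦ ENNReal.ofReal (lazyRW r m x), by
    have hsum := hasSum_lazyRW r m
    rw [ENNReal.summable.hasSum_iff,
      ← ENNReal.ofReal_tsum_of_nonneg (lazyRW_nonneg r.2 m) hsum.summable, hsum.tsum_eq,
      ENNReal.ofReal_one]⟩

lemma integral_lazyRWPMF {E : Type*} [NormedAddCommGroup E] [NormedSpace ℝ E] [CompleteSpace E]
    (r : unitInterval) (m : ℕ) {f : ℤ → E} (hf : Integrable f (lazyRWPMF r m).toMeasure) :
    ∫ x, f x ∂(lazyRWPMF r m).toMeasure = ∑' x : ℤ, lazyRW r m x • f x := by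
  rw [PMF.integral_eq_tsum _ _ hf]
  exact tsum_congr fun x ↦ congrArg (· • f x) (ENNReal.toReal_ofReal (lazyRW_nonneg r.2 m x))

lemma charFun_map_intCast_lazyRWPMF (r : unitInterval) (m : ℕ) (t : ℝ) :
    charFun ((lazyRWPMF r m).toMeasure.map ((↑) : ℤ → ℝ)) t =
      ((1 + r * (Real.cos t - 1) : ℝ) : ℂ) ^ m := by
  set z := Complex.exp (t * Complex.I)
  have hcharacter (x : ℤ) : Complex.exp (t * (x : ℝ) * Complex.I) = z ^ x := by
    rw [← Complex.exp_int_mul, Complex.ofReal_intCast]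
    ring_nf
  have hint : Integrable (fun x : ℤ ↦ z ^ x) (lazyRWPMF r m).toMeasure :=
    .of_bound .of_discrete 1 <| ae_of_all _ fun x ↦ by
      simp [z, Complex.norm_exp_ofReal_mul_I]
  have hcos : z + z⁻¹ = 2 * Complex.cos t := by
    rw [Complex.two_cos, neg_mul, Complex.exp_neg]
  rw [charFun_apply_real, integral_map .of_discrete (by fun_prop)]
  simp_rw [hcharacter]
  rw [integral_lazyRWPMF r m hint, (hasSum_lazyRW_smul_zpow r m (Complex.exp_ne_zero _)).tsum_eq,
    hcos]
  simp only [Complex.real_smul]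
  push_cast
  ring

lemma one_sub_cos_eq_sq_div_two_mul_sinc_sq (x : ℝ) :
    1 - Real.cos x = x ^ 2 / 2 * Real.sinc (x / 2) ^ 2 := by
  rcases eq_or_ne x 0 with rfl | hx
  · simp
  · have hdouble : Real.sin (x / 2) ^ 2 = 1 / 2 - Real.cos x / 2 := by
      rw [Real.sin_sq_eq_half_sub, mul_div_cancel₀ x two_ne_zero]
    rw [Real.sinc_of_ne_zero (div_ne_zero hx two_ne_zero), div_pow, hdouble]
    field_simp

lemma tendsto_mul_cos_div_sqrt_sub_one (t : ℝ) :
    Tendsto (fun y ↦ y * (Real.cos (t / √y) - 1)) atTop (𝓝 (-t ^ 2 / 2)) := by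
  have harg : Tendsto (fun y ↦ t / √y / 2) atTop (𝓝 0) := by
    simpa using (Real.tendsto_sqrt_atTop.const_div_atTop t).div_const 2
  have hsinc : Tendsto (fun y ↦ -t ^ 2 / 2 * Real.sinc (t / √y / 2) ^ 2) atTop
      (𝓝 (-t ^ 2 / 2)) := by
    simpa using (((Real.continuous_sinc.tendsto 0).comp harg).pow 2).const_mul (-t ^ 2 / 2)
  refine hsinc.congr' ?_
  filter_upwards [eventually_gt_atTop 0] with y hy
  rw [← neg_sub, one_sub_cos_eq_sq_div_two_mul_sinc_sq, div_pow, Real.sq_sqrt hy.le]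
  field_simp

lemma tendsto_charFun_lazyRWPMF {r : ℕ → unitInterval}
    (hlim : Tendsto (fun T : ℕ ↦ (T : ℝ) * r T) atTop atTop) (t : ℝ) :
    Tendsto (fun T ↦ charFun
        ((lazyRWPMF (r T) T).toMeasure.map fun x : ℤ ↦ (x : ℝ) / √(T * r T)) t)
      atTop (𝓝 (charFun (gaussianReal 0 1) t)) := by
  have hexponent : Tendsto (fun T : ℕ ↦ (T : ℝ) * (r T * (Real.cos (t / √(T * r T)) - 1))) atTop
      (𝓝 (-t ^ 2 / 2)) :=
    ((tendsto_mul_cos_div_sqrt_sub_one t).comp hlim).congr fun T ↦ mul_assoc _ _ _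
  have hgauss : charFun (gaussianReal 0 1) t = (Real.exp (-t ^ 2 / 2) : ℂ) := by
    simp [charFun_gaussianReal, neg_div]
  have hwalk (T : ℕ) :
      charFun ((lazyRWPMF (r T) T).toMeasure.map fun x : ℤ ↦ (x : ℝ) / √(T * r T)) t =
        (((1 + r T * (Real.cos (t / √(T * r T)) - 1)) ^ T : ℝ) : ℂ) := by
    simp_rw [div_eq_inv_mul]
    rw [charFun_map_mul_comp .of_discrete, charFun_map_intCast_lazyRWPMF, Complex.ofReal_pow]
  simp_rw [hgauss, hwalk]
  exact (Complex.continuous_ofReal.tendsto _).comp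
    (Real.tendsto_one_add_pow_exp_of_tendsto hexponent)

theorem tendstoInDistribution_lazyRWPMF {r : ℕ → unitInterval}
    (hlim : Tendsto (fun T : ℕ ↦ (T : ℝ) * r T) atTop atTop) :
    TendstoInDistribution (fun T (x : ℤ) ↦ (x : ℝ) / √(T * r T)) atTop id
      (fun T ↦ (lazyRWPMF (r T) T).toMeasure) (gaussianReal 0 1) where
  forall_aemeasurable _ := .of_discrete
  tendsto := ProbabilityMeasure.tendsto_iff_tendsto_charFun.2 fun t ↦ by
    simpa only [ProbabilityMeasure.coe_mk, Measure.map_id] using tendsto_charFun_lazyRWPMF hlim t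

lemma integral_gaussianReal_zero_one {E : Type*} [NormedAddCommGroup E] [NormedSpace ℝ E]
    (f : ℝ → E) :
    ∫ x, f x ∂gaussianReal 0 1 = (1 / √(2 * π)) • ∫ x, Real.exp (-x ^ 2 / 2) • f x := by
  rw [integral_gaussianReal_eq_integral_smul one_ne_zero, ← integral_smul]
  simp [gaussianPDFReal, mul_smul]

theorem lazy_rw_clt_general (r : ℕ → ℝ) (hr : ∀ T : ℕ, r T ∈ Set.Icc (0 : ℝ) 1)
    (hlim : Tendsto (fun T : ℕ => (T : ℝ) * r T) atTop atTop) :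
    ∀ g : ℝ → ℝ, Continuous g → (∃ M : ℝ, ∀ x : ℝ, |g x| ≤ M) →
      Tendsto
        (fun T : ℕ => ∑' x : ℤ, lazyRW (r T) T x * g ((x : ℝ) / Real.sqrt ((T : ℝ) * r T)))
        atTop
        (𝓝 ((1 / Real.sqrt (2 * π)) * ∫ x : ℝ, g x * Real.exp (-x ^ 2 / 2))) := by
  rintro g hg ⟨M, hM⟩
  let ρ (T : ℕ) : unitInterval := ⟨r T, hr T⟩
  have hweak := ProbabilityMeasure.tendsto_iff_forall_integral_tendsto.1
    (tendstoInDistribution_lazyRWPMF (r := ρ) hlim).tendsto (.ofNormedAddCommGroup g hg M hM)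
  have hwalk (T : ℕ) :
      ∫ y, g y ∂(lazyRWPMF (ρ T) T).toMeasure.map (fun x : ℤ ↦ (x : ℝ) / √(T * r T)) =
        ∑' x : ℤ, lazyRW (r T) T x * g ((x : ℝ) / √(T * r T)) := by
    rw [integral_map .of_discrete hg.aestronglyMeasurable]
    exact integral_lazyRWPMF _ _ (.of_bound .of_discrete M (ae_of_all _ fun x ↦ hM _))
  have hgauss : ∫ x, g x ∂(gaussianReal 0 1).map id =
      (1 / √(2 * π)) * ∫ x, g x * Real.exp (-x ^ 2 / 2) := by
    simp_rw [Measure.map_id, integral_gaussianReal_zero_one, smul_eq_mul, mul_comm]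
  rw [← hgauss]
  exact hweak.congr hwalk

/-- Central limit theorem for the final-time-dependent lazy random walk:
if `T·r(T) → ∞`, then `L_T / √(T·r(T)) ⇒ N(0,1)`. -/
theorem lazy_rw_clt (r : ℕ → ℝ) (hr : ∀ T : ℕ, r T ∈ Set.Ioo (0 : ℝ) 1)
    (hlim : Tendsto (fun T : ℕ => (T : ℝ) * r T) atTop atTop) :
    ∀ g : ℝ → ℝ, Continuous g → (∃ M : ℝ, ∀ x : ℝ, |g x| ≤ M) →
      Tendsto
        (fun T : ℕ => ∑' x : ℤ, lazyRW (r T) T x * g ((x : ℝ) / Real.sqrt ((T : ℝ) * r T)))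
        atTop
        (𝓝 ((1 / Real.sqrt (2 * π)) * ∫ x : ℝ, g x * Real.exp (-x ^ 2 / 2))) :=
  lazy_rw_clt_general r (fun T ↦ Set.Ioo_subset_Icc_self (hr T)) hlim
end

section
/- Fix 0 < r < 1 and set r(T) := r/T. Let p^{(T)}_T be the law at time T of the lazy random walk with rate r(T). Then for every x ∈ ℤ, p^{(T)}_T(x) → e^{−r} · I_{|x|}(r) as T → ∞, where I_ν is the modified Bessel function of the first kind of integer order ν ≥ 0, I_ν(z) = Σ_{m=0}^∞ (z/2)^{2m+ν}/(m!(m+ν)!). -/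
open scoped Real
open Filter Topology

/-- Modified Bessel function of the first kind of integer order `ν ≥ 0`:
`I_ν(z) = Σ_{m=0}^∞ (z/2)^(2m+ν) / (m! (m+ν)!)`. -/
noncomputable def besselI (ν : ℕ) (z : ℝ) : ℝ :=
  ∑' m : ℕ, (z / 2) ^ (2 * m + ν) / ((m.factorial : ℝ) * ((m + ν).factorial : ℝ))

/-! The law of the walk after `n` steps is the coefficient sequence of the Laurent polynomial
`((1 - r) + r A) ^ n`, where `A = (T + T⁻¹) / 2` generates one step of the simple random walk.
Expanding in powers of `A` exhibits the lazy walk as a simple random walk run for a binomial number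
of steps, and when `r` depends on `n` with `n r` convergent, that number is Poisson in the limit.
The simple random walk reaches `x` only in `2 m + |x|` steps, so the Poisson average is a sum over
`m`, which the binomial probability of doing so turns into the Bessel series. -/

theorem abs_choose_mul_pow_mul_one_sub_pow_le {n : ℕ} {p R : ℝ} (h : |n * p| ≤ R) (k : ℕ) :
    |n.choose k * p ^ k * (1 - p) ^ (n - k)| ≤ R ^ k / k.factorial * Real.exp R := by
  rw [abs_mul, Nat.abs_cast] at h
  have choose_part : n.choose k * |p| ^ k ≤ R ^ k / k.factorial :=
    calc n.choose k * |p| ^ k ≤ (n : ℝ) ^ k / k.factorial * |p| ^ k := by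
          gcongr
          exact Nat.choose_le_pow_div k n
      _ = (n * |p|) ^ k / k.factorial := by ring
      _ ≤ R ^ k / k.factorial := by gcongr
  have exp_part : |1 - p| ^ (n - k) ≤ Real.exp R :=
    calc |1 - p| ^ (n - k) ≤ Real.exp |p| ^ (n - k) := by
          gcongr
          calc |1 - p| ≤ |p| + 1 := by simpa [add_comm] using abs_sub 1 p
            _ ≤ Real.exp |p| := Real.add_one_le_exp _
      _ ≤ Real.exp |p| ^ n :=
          pow_le_pow_right₀ (Real.one_le_exp (abs_nonneg p)) (Nat.sub_le n k)
      _ = Real.exp (n * |p|) := (Real.exp_nat_mul _ n).symm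
      _ ≤ Real.exp R := Real.exp_le_exp.mpr h
  rw [abs_mul, abs_mul, Nat.abs_cast, abs_pow, abs_pow]
  exact mul_le_mul choose_part exp_part (by positivity) (le_trans (by positivity) choose_part)

theorem tendsto_sum_binomial_smul_of_tendsto_mul_atTop {E : Type*} [NormedAddCommGroup E]
    [NormedSpace ℝ E] [CompleteSpace E] {p : ℕ → ℝ} {r : ℝ}
    (hp : Tendsto (fun n : ℕ => n * p n) atTop (𝓝 r)) {f : ℕ → E} {C : ℝ}
    (hf : ∀ k, ‖f k‖ ≤ C) :
    Tendsto (fun n : ℕ => ∑ k ∈ Finset.range (n + 1),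
        (n.choose k * p n ^ k * (1 - p n) ^ (n - k)) • f k) atTop
      (𝓝 (∑' k : ℕ, (Real.exp (-r) * r ^ k / k.factorial) • f k)) := by
  have sum_eq_tsum (n : ℕ) :
      ∑' k, (n.choose k * p n ^ k * (1 - p n) ^ (n - k)) • f k =
        ∑ k ∈ Finset.range (n + 1), (n.choose k * p n ^ k * (1 - p n) ^ (n - k)) • f k := by
    refine tsum_eq_sum fun k hk => ?_
    rw [Nat.choose_eq_zero_of_lt (by simpa using hk)]
    simp
  have bound_summable :
      Summable fun k : ℕ => (|r| + 1) ^ k / k.factorial * Real.exp (|r| + 1) * C :=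
    ((Real.summable_pow_div_factorial _).mul_right _).mul_right C
  refine (tendsto_tsum_of_dominated_convergence bound_summable (fun k => ?_) ?_).congr sum_eq_tsum
  · exact (ProbabilityTheory.tendsto_choose_mul_pow_of_tendsto_mul_atTop k hp).smul_const (f k)
  · filter_upwards [hp.abs.eventually_le_const (lt_add_one |r|)] with n hn k
    rw [norm_smul, Real.norm_eq_abs]
    gcongr
    · exact abs_choose_mul_pow_mul_one_sub_pow_le hn k
    · exact hf k

theorem lazyRW_mem_Icc {r : ℝ} (hr : r ∈ Set.Icc 0 1) (n : ℕ) (x : ℤ) :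
    lazyRW r n x ∈ Set.Icc 0 1 := by
  induction n generalizing x with
  | zero => by_cases hx : x = 0 <;> simp [lazyRW, hx]
  | succ n ih =>
    have average_mem : (1 / 2 : ℝ) • lazyRW r n (x - 1) + (1 / 2 : ℝ) • lazyRW r n (x + 1) ∈
        Set.Icc 0 1 :=
      convex_Icc 0 1 (ih (x - 1)) (ih (x + 1)) (by norm_num) (by norm_num) (by norm_num)
    convert convex_Icc 0 1 (ih x) average_mem (sub_nonneg.mpr hr.2) hr.1 (by ring) using 1
    simp only [lazyRW, smul_eq_mul]
    ring

theorem lazyRW_neg (r : ℝ) (n : ℕ) (x : ℤ) : lazyRW r n (-x) = lazyRW r n x := by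
  induction n generalizing x with
  | zero => simp [lazyRW]
  | succ n ih =>
    rw [lazyRW, lazyRW, ih, show -x - 1 = -(x + 1) by ring, show -x + 1 = -(x - 1) by ring,
      ih, ih, add_comm (lazyRW r n (x + 1))]

theorem lazyRW_natAbs (r : ℝ) (n : ℕ) (x : ℤ) : lazyRW r n x.natAbs = lazyRW r n x := by
  rcases Int.natAbs_eq x with hx | hx
  · rw [← hx]
  · rw [hx, lazyRW_neg, Int.natAbs_neg, Int.natAbs_natCast]

section GeneratingFunction

open LaurentPolynomial
open Finset.HasAntidiagonal (antidiagonal)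

/-- The generating Laurent polynomial of one step of the simple random walk on `ℤ`: the coefficient
of `T ^ x` is the probability of a displacement by `x`. -/
noncomputable def simpleStep : ℝ[T;T⁻¹] := (1 / 2 : ℝ) • (T 1 + T (-1))

theorem coeff_simpleStep_mul (f : ℝ[T;T⁻¹]) (x : ℤ) :
    (simpleStep * f).coeff x = 1 / 2 * (f.coeff (x - 1) + f.coeff (x + 1)) := by
  rw [simpleStep, smul_mul_assoc, add_mul, T, T]
  simp only [AddMonoidAlgebra.coeff_smul, AddMonoidAlgebra.coeff_add, Finsupp.smul_apply,
    Finsupp.add_apply, AddMonoidAlgebra.coeff_single_mul_apply, smul_eq_mul, one_mul, neg_neg]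
  rw [neg_add_eq_sub, add_comm 1 x]

theorem lazyRW_eq_coeff (r : ℝ) (n : ℕ) (x : ℤ) :
    lazyRW r n x = ((r • simpleStep + (1 - r) • 1) ^ n).coeff x := by
  induction n generalizing x with
  | zero => simp only [lazyRW, pow_zero, ← T_zero, T_apply, eq_comm]
  | succ n ih =>
    rw [pow_succ', add_mul, smul_mul_assoc, smul_mul_assoc, one_mul]
    simp only [lazyRW, ih, AddMonoidAlgebra.coeff_add, AddMonoidAlgebra.coeff_smul,
      Finsupp.add_apply, Finsupp.smul_apply, coeff_simpleStep_mul, smul_eq_mul]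
    ring

theorem lazyRW_one_eq_coeff (n : ℕ) (x : ℤ) : lazyRW 1 n x = (simpleStep ^ n).coeff x := by
  simp [lazyRW_eq_coeff]

theorem lazyRW_eq_sum_binomial (r : ℝ) (n : ℕ) (x : ℤ) :
    lazyRW r n x = ∑ k ∈ Finset.range (n + 1),
      n.choose k * r ^ k * (1 - r) ^ (n - k) * lazyRW 1 k x := by
  rw [lazyRW_eq_coeff, add_pow, AddMonoidAlgebra.coeff_sum, Finsupp.finsetSum_apply]
  refine Finset.sum_congr rfl fun k _ => ?_
  rw [lazyRW_one_eq_coeff, smul_pow, smul_pow, one_pow, mul_smul_one, smul_smul, ← nsmul_eq_mul',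
    ← Nat.cast_smul_eq_nsmul ℝ, smul_smul, AddMonoidAlgebra.coeff_smul, Finsupp.smul_apply,
    smul_eq_mul]
  ring

theorem simpleStep_pow (k : ℕ) :
    simpleStep ^ k =
      ∑ ij ∈ antidiagonal k, ((k.choose ij.1 : ℝ) / 2 ^ k) • T ((ij.1 : ℤ) - ij.2) := by
  rw [simpleStep, smul_pow, (Commute.all _ _).add_pow', Finset.smul_sum]
  refine Finset.sum_congr rfl fun ij _ => ?_
  rw [T_pow, T_pow, ← T_add, mul_one, mul_neg_one, ← sub_eq_add_neg, ← Nat.cast_smul_eq_nsmul ℝ,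
    smul_smul, one_div, inv_pow, inv_mul_eq_div]

theorem lazyRW_one_eq_sum_antidiagonal (k : ℕ) (x : ℤ) :
    lazyRW 1 k x = ∑ ij ∈ antidiagonal k,
      if (ij.1 : ℤ) - ij.2 = x then (k.choose ij.1 : ℝ) / 2 ^ k else 0 := by
  rw [lazyRW_one_eq_coeff, simpleStep_pow]
  simp [AddMonoidAlgebra.coeff_sum, Finsupp.finsetSum_apply]

end GeneratingFunction

theorem exists_add_eq_sub_eq_of_lazyRW_one_ne_zero {k : ℕ} {x : ℤ} (h : lazyRW 1 k x ≠ 0) :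
    ∃ i j : ℕ, i + j = k ∧ (i : ℤ) - j = x := by
  rw [lazyRW_one_eq_sum_antidiagonal] at h
  obtain ⟨⟨i, j⟩, hk, hx⟩ := Finset.exists_ne_zero_of_sum_ne_zero h
  exact ⟨i, j, Finset.HasAntidiagonal.mem_antidiagonal.mp hk, (ite_ne_right_iff.mp hx).1⟩

theorem lazyRW_one_add_sub (i j : ℕ) :
    lazyRW 1 (i + j) (i - j) = ((i + j).choose i : ℝ) / 2 ^ (i + j) := by
  rw [lazyRW_one_eq_sum_antidiagonal, Finset.sum_eq_single_of_mem (i, j) (by simp)]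
  · exact if_pos rfl
  · rintro ⟨i', j'⟩ hmem hne
    refine if_neg fun h => hne ?_
    rw [Finset.HasAntidiagonal.mem_antidiagonal] at hmem
    grind

theorem pow_div_factorial_mul_lazyRW_one (z : ℝ) (ν m : ℕ) :
    z ^ (2 * m + ν) / (2 * m + ν).factorial * lazyRW 1 (2 * m + ν) ν =
      (z / 2) ^ (2 * m + ν) / (m.factorial * (m + ν).factorial) := by
  have position_prob :
      lazyRW 1 (2 * m + ν) ν = ((2 * m + ν).choose (m + ν) : ℝ) / 2 ^ (2 * m + ν) := by
    convert lazyRW_one_add_sub (m + ν) m using 2 <;> grind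
  have choose_eq : ((2 * m + ν).choose (m + ν) : ℝ) =
      (2 * m + ν).factorial / ((m + ν).factorial * m.factorial) := by
    rw [show 2 * m + ν = m + ν + m by ring, Nat.cast_add_choose]
  rw [position_prob, choose_eq, div_pow]
  field_simp

theorem tsum_pow_div_factorial_mul_lazyRW_one (z : ℝ) (x : ℤ) :
    ∑' k : ℕ, z ^ k / k.factorial * lazyRW 1 k x = besselI x.natAbs z := by
  simp_rw [← lazyRW_natAbs 1 _ x]
  generalize x.natAbs = ν
  have injective_steps : Function.Injective fun m : ℕ => 2 * m + ν := fun a b h => by grind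
  rw [besselI, ← injective_steps.tsum_eq]
  · exact tsum_congr (pow_div_factorial_mul_lazyRW_one z ν)
  · intro k hk
    obtain ⟨i, j, rfl, hν⟩ := exists_add_eq_sub_eq_of_lazyRW_one_ne_zero (right_ne_zero_of_mul hk)
    exact ⟨j, by grind⟩

theorem lazy_rw_bessel_limit_general {ρ : ℕ → ℝ} {r : ℝ}
    (hρ : Tendsto (fun T : ℕ => T * ρ T) atTop (𝓝 r)) (x : ℤ) :
    Tendsto (fun T : ℕ => lazyRW (ρ T) T x) atTop
      (𝓝 (Real.exp (-r) * besselI x.natAbs r)) := by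
  have simple_le_one (k : ℕ) : ‖lazyRW 1 k x‖ ≤ 1 := by
    have h := lazyRW_mem_Icc (Set.right_mem_Icc.mpr zero_le_one) k x
    exact (Real.norm_of_nonneg h.1).trans_le h.2
  have poisson_average :
      ∑' k : ℕ, (Real.exp (-r) * r ^ k / k.factorial) • lazyRW 1 k x =
        Real.exp (-r) * besselI x.natAbs r := by
    simp_rw [← tsum_pow_div_factorial_mul_lazyRW_one, ← tsum_mul_left, smul_eq_mul, mul_div_assoc,
      mul_assoc]
  rw [← poisson_average]
  exact (tendsto_sum_binomial_smul_of_tendsto_mul_atTop hρ simple_le_one).congr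
    fun T => by simp only [lazyRW_eq_sum_binomial (ρ T) T x, smul_eq_mul]

/-- Localized regime `r(T) = r / T`: the law of the lazy random walk at the final time
converges pointwise to `e^{-r} I_{|x|}(r)`. -/
theorem lazy_rw_bessel_limit (r : ℝ) (hr0 : 0 < r) (hr1 : r < 1) :
    ∀ x : ℤ,
      Tendsto (fun T : ℕ => lazyRW (r / (T : ℝ)) T x) atTop
        (𝓝 (Real.exp (-r) * besselI x.natAbs r)) := by
  refine lazy_rw_bessel_limit_general (tendsto_const_nhds.congr' ?_)
  filter_upwards [eventually_ne_atTop 0] with T hT using by field_simp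
end

section
/- Let r : ℕ → (0,1) satisfy T·r(T) → 0 as T → ∞, and set t_T := T·√(r(T)). For k ∈ ℝ, let Ĉ_{r(T)}(k) := [[e^{−ik}√(r(T)), e^{−ik}√(1−r(T))],[e^{ik}√(1−r(T)), −e^{ik}√(r(T))]] and V(k) := [[0, e^{−ik}],[e^{ik}, 0]]. Then for every k ∈ ℝ, the matrices (Ĉ_{r(T)}(k))^T − (1/2)·[e^{−i t_T sin k}(I + V(k)) + (−1)^T e^{+i t_T sin k}(I − V(k))] converge to the zero matrix (entrywise) as T → ∞. -/
open scoped Real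
open Filter Topology

/-- Fourier transform of one step of the walk with the final-time-dependent coin:
`Ĉ_r(k) = [[e^{-ik}√r, e^{-ik}√(1-r)],[e^{ik}√(1-r), -e^{ik}√r]]`. -/
noncomputable def Chat (r k : ℝ) : Matrix (Fin 2) (Fin 2) ℂ :=
  !![Complex.exp (-Complex.I * k) * Real.sqrt r,
     Complex.exp (-Complex.I * k) * Real.sqrt (1 - r);
     Complex.exp (Complex.I * k) * Real.sqrt (1 - r),
     -Complex.exp (Complex.I * k) * Real.sqrt r]

/-- `V(k) = [[0, e^{-ik}],[e^{ik}, 0]]`. -/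
noncomputable def Vmat (k : ℝ) : Matrix (Fin 2) (Fin 2) ℂ :=
  !![0, Complex.exp (-Complex.I * k); Complex.exp (Complex.I * k), 0]

/-!
The matrix `Ĉ_r(k)` has determinant `-1` and trace `-2i √r sin k`, so its eigenvalues are `e^{-iθ}`
and `-e^{iθ}` with `sin θ = √r sin k`, and its `T`-th power is the corresponding combination of its
two spectral projections. As `r → 0` these tend to the spectral projections `(I ± V(k)) / 2` of
`V(k)` for the eigenvalues `±1`. The phase `T θ` differs from `T √r sin k` by `O(T √r ^ 3)`, because
`arcsin s - s = O(s ^ 3)`, and `T √r ^ 3 ≤ T r`.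
-/

theorem pow_mul_eq_pow_smul_of_mul_eq_smul {R A : Type*} [CommSemiring R] [Semiring A]
    [Algebra R A] {a : R} {x y : A} (h : x * y = a • y) (n : ℕ) : x ^ n * y = a ^ n • y := by
  induction n with
  | zero => simp
  | succ n ih => rw [pow_succ, mul_assoc, h, mul_smul_comm, ih, smul_smul, pow_succ']

section SpectralProjection

variable {K A : Type*} [Field K] [Ring A] [Algebra K A]

/-- The spectral projection for the eigenvalue `a` of an element `x` annihilated by
`(X - a) (X - b)`, written as a Lagrange interpolation polynomial in `x`. If `a = b`, the value
is `0`. -/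
def spectralProj (a b : K) (x : A) : A :=
  (a - b)⁻¹ • (x - algebraMap K A b)

theorem mul_spectralProj {a b : K} {x : A}
    (hx : (x - algebraMap K A a) * (x - algebraMap K A b) = 0) :
    x * spectralProj a b x = a • spectralProj a b x := by
  rw [sub_mul, sub_eq_zero, ← Algebra.smul_def] at hx
  rw [spectralProj, mul_smul_comm, hx, smul_comm]

theorem spectralProj_add_spectralProj {a b : K} (hab : a ≠ b) (x : A) :
    spectralProj a b x + spectralProj b a x = 1 := by
  have hinv : (b - a)⁻¹ = -(a - b)⁻¹ := by rw [← neg_sub a b, inv_neg]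
  rw [spectralProj, spectralProj, hinv, neg_smul, ← sub_eq_add_neg, ← smul_sub,
    sub_sub_sub_cancel_left, ← map_sub, Algebra.algebraMap_eq_smul_one, smul_smul,
    inv_mul_cancel₀ (sub_ne_zero.2 hab), one_smul]

theorem pow_eq_smul_spectralProj_add {a b : K} (hab : a ≠ b) {x : A}
    (hx : (x - algebraMap K A a) * (x - algebraMap K A b) = 0) (n : ℕ) :
    x ^ n = a ^ n • spectralProj a b x + b ^ n • spectralProj b a x := by
  have hx' : (x - algebraMap K A b) * (x - algebraMap K A a) = 0 := by
    rw [← hx]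
    exact (((Commute.refl x).sub_left (Algebra.commutes b x)).sub_right
      ((Algebra.commutes a _).symm)).eq
  rw [← pow_mul_eq_pow_smul_of_mul_eq_smul (mul_spectralProj hx),
    ← pow_mul_eq_pow_smul_of_mul_eq_smul (mul_spectralProj hx'), ← mul_add,
    spectralProj_add_spectralProj hab, mul_one]

theorem spectralProj_one_neg_one (x : A) :
    spectralProj (1 : K) (-1) x = (1 / 2 : K) • (1 + x) := by
  rw [spectralProj, map_neg, map_one, sub_neg_eq_add, sub_neg_eq_add, one_add_one_eq_two,
    one_div, add_comm]

theorem spectralProj_neg_one_one (x : A) :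
    spectralProj (-1 : K) 1 x = (1 / 2 : K) • (1 - x) := by
  rw [spectralProj, map_one, ← neg_sub 1 x, ← neg_add', one_add_one_eq_two, inv_neg, neg_smul_neg,
    one_div]

end SpectralProjection

theorem sub_mul_sub_eq_zero_of_trace_of_det {R : Type*} [CommRing R]
    {M : Matrix (Fin 2) (Fin 2) R} {a b : R} (htr : M.trace = a + b) (hdet : M.det = a * b) :
    (M - algebraMap R _ a) * (M - algebraMap R _ b) = 0 := by
  nontriviality R
  have hchar : M.charpoly = (.X - .C a) * (.X - .C b) := by
    rw [M.charpoly_fin_two, htr, hdet, map_add, map_mul]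
    ring
  simpa [hchar] using M.aeval_self_charpoly

section Limits

variable {ι : Type*} {l : Filter ι}

theorem tendsto_smul_sub_smul_of_norm_le_one {𝕜 E : Type*} [NontriviallyNormedField 𝕜]
    [AddCommGroup E] [Module 𝕜 E] [TopologicalSpace E] [IsTopologicalAddGroup E]
    [ContinuousSMul 𝕜 E] {u v : ι → 𝕜} {x : ι → E} {y : E} (hu : ∀ᶠ i in l, ‖u i‖ ≤ 1)
    (huv : Tendsto (fun i => u i - v i) l (𝓝 0)) (hx : Tendsto x l (𝓝 y)) :
    Tendsto (fun i => u i • x i - v i • y) l (𝓝 0) := by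
  have hxy : Tendsto (fun i => u i • (x i - y)) l (𝓝 0) := by
    refine (nhds_basis_balanced 𝕜 E).tendsto_right_iff.2 fun s hs => ?_
    filter_upwards [hu, (tendsto_sub_nhds_zero_iff.2 hx).eventually_mem hs.1] with i hui hxi
    exact hs.2.smul_mem hui hxi
  simpa [smul_sub, sub_smul] using hxy.add (huv.smul_const y)

theorem tendsto_spectralProj {K A : Type*} [Field K] [TopologicalSpace K] [ContinuousSub K]
    [ContinuousInv₀ K] [Ring A] [Algebra K A] [TopologicalSpace A] [ContinuousSub A]
    [ContinuousSMul K A] {a b : ι → K} {x : ι → A} {a₀ b₀ : K} {x₀ : A} (hab : a₀ ≠ b₀)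
    (ha : Tendsto a l (𝓝 a₀)) (hb : Tendsto b l (𝓝 b₀)) (hx : Tendsto x l (𝓝 x₀)) :
    Tendsto (fun i => spectralProj (a i) (b i) (x i)) l (𝓝 (spectralProj a₀ b₀ x₀)) := by
  simp only [spectralProj, Algebra.algebraMap_eq_smul_one]
  exact ((ha.sub hb).inv₀ (sub_ne_zero.2 hab)).smul (hx.sub (hb.smul_const 1))

theorem norm_exp_I_mul_sub_exp_I_mul_le (x y : ℝ) :
    ‖Complex.exp (Complex.I * x) - Complex.exp (Complex.I * y)‖ ≤ ‖x - y‖ := by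
  have hfactor : Complex.exp (Complex.I * x) - Complex.exp (Complex.I * y) =
      Complex.exp (Complex.I * y) * (Complex.exp (Complex.I * (x - y : ℝ)) - 1) := by
    rw [mul_sub, ← Complex.exp_add, mul_one, ← mul_add, ← Complex.ofReal_add, add_sub_cancel]
  rw [hfactor, norm_mul, Complex.norm_exp_I_mul_ofReal, one_mul]
  exact Real.norm_exp_I_mul_ofReal_sub_one_le

theorem tendsto_exp_I_mul_sub_exp_I_mul {x y : ι → ℝ}
    (h : Tendsto (fun i => x i - y i) l (𝓝 0)) :
    Tendsto (fun i => Complex.exp (Complex.I * x i) - Complex.exp (Complex.I * y i)) l (𝓝 0) :=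
  squeeze_zero_norm (fun i => norm_exp_I_mul_sub_exp_I_mul_le (x i) (y i))
    (tendsto_zero_iff_norm_tendsto_zero.1 h)

end Limits

theorem tendsto_zero_of_tendsto_natCast_mul_pow {s : ℕ → ℝ} {n : ℕ} (hn : n ≠ 0)
    (h : Tendsto (fun T : ℕ => (T : ℝ) * s T ^ n) atTop (𝓝 0)) : Tendsto s atTop (𝓝 0) := by
  have hle : ∀ᶠ T : ℕ in atTop, ‖s T ^ n‖ ≤ ‖(T : ℝ) * s T ^ n‖ := by
    filter_upwards [eventually_ge_atTop 1] with T hT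
    rw [norm_mul, Real.norm_natCast]
    exact le_mul_of_one_le_left (norm_nonneg _) (by exact_mod_cast hT)
  have hpow : Tendsto (s ^ n) atTop (𝓝 0) :=
    squeeze_zero_norm' hle (tendsto_zero_iff_norm_tendsto_zero.1 h)
  refine (Asymptotics.isLittleO_one_iff ℝ).1 (.of_pow (n := n) ?_ hn)
  simpa only [one_pow, Pi.pow_def, Asymptotics.isLittleO_one_iff] using hpow

theorem arcsin_sub_self_isBigO : (fun s : ℝ => Real.arcsin s - s) =O[𝓝 0] fun s => s ^ 3 := by
  have harcsin : Real.arcsin =O[𝓝 0] fun s => s := by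
    simpa using (Real.hasDerivAt_arcsin (x := 0) (by simp) (by simp)).isBigO_sub
  refine Asymptotics.IsBigO.trans (.of_bound (1 / 6) ?_) (harcsin.pow 3)
  filter_upwards [Icc_mem_nhds (by simp : (-1 : ℝ) < 0) one_pos] with s hs
  simpa [Real.sin_arcsin hs.1 hs.2, div_eq_inv_mul] using Real.abs_sub_sin_le (Real.arcsin s)

/-- The angle `θ` with `sin θ = √r sin k` for which `Ĉ_r(k)` has the eigenvalues `e^{-iθ}` and
`-e^{iθ}`. -/
noncomputable def eigenphase (r k : ℝ) : ℝ :=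
  Real.arcsin (√r * Real.sin k)

theorem abs_sqrt_mul_sin_le (r k : ℝ) : |√r * Real.sin k| ≤ √r := by
  rw [abs_mul, abs_of_nonneg (Real.sqrt_nonneg r)]
  exact mul_le_of_le_one_right (Real.sqrt_nonneg r) (Real.abs_sin_le_one k)

theorem sin_eigenphase {r : ℝ} (hr : r ≤ 1) (k : ℝ) :
    Real.sin (eigenphase r k) = √r * Real.sin k :=
  have h := abs_le.1 ((abs_sqrt_mul_sin_le r k).trans (Real.sqrt_le_one.2 hr))
  Real.sin_arcsin h.1 h.2

theorem cos_eigenphase_pos {r : ℝ} (hr : r < 1) (k : ℝ) : 0 < Real.cos (eigenphase r k) := by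
  have h : |√r * Real.sin k| < 1 :=
    (abs_sqrt_mul_sin_le r k).trans_lt ((Real.sqrt_lt' one_pos).2 (by simpa using hr))
  rw [eigenphase, Real.cos_arcsin, Real.sqrt_pos, sub_pos, sq_lt_one_iff_abs_lt_one]
  exact h

/-- The eigenvalue of `Ĉ_r(k)` that tends to `1` as `r → 0`. -/
noncomputable def eigenvalPos (r k : ℝ) : ℂ :=
  Complex.exp (Complex.I * (-eigenphase r k : ℝ))

/-- The eigenvalue of `Ĉ_r(k)` that tends to `-1` as `r → 0`. -/
noncomputable def eigenvalNeg (r k : ℝ) : ℂ :=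
  -Complex.exp (Complex.I * eigenphase r k)

theorem norm_eigenvalPos (r k : ℝ) : ‖eigenvalPos r k‖ = 1 :=
  Complex.norm_exp_I_mul_ofReal _

theorem norm_eigenvalNeg (r k : ℝ) : ‖eigenvalNeg r k‖ = 1 := by
  rw [eigenvalNeg, norm_neg, Complex.norm_exp_I_mul_ofReal]

theorem eigenvalPos_add_eigenvalNeg (r k : ℝ) :
    eigenvalPos r k + eigenvalNeg r k = -2 * Complex.I * Real.sin (eigenphase r k) := by
  simp only [eigenvalPos, eigenvalNeg, mul_comm Complex.I, Complex.exp_mul_I,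
    ← Complex.ofReal_cos, ← Complex.ofReal_sin, Real.cos_neg, Real.sin_neg]
  push_cast
  ring

theorem eigenvalPos_sub_eigenvalNeg (r k : ℝ) :
    eigenvalPos r k - eigenvalNeg r k = 2 * Real.cos (eigenphase r k) := by
  simp only [eigenvalPos, eigenvalNeg, mul_comm Complex.I, Complex.exp_mul_I,
    ← Complex.ofReal_cos, ← Complex.ofReal_sin, Real.cos_neg, Real.sin_neg]
  push_cast
  ring

theorem eigenvalPos_mul_eigenvalNeg (r k : ℝ) : eigenvalPos r k * eigenvalNeg r k = -1 := by
  rw [eigenvalPos, eigenvalNeg, mul_neg, ← Complex.exp_add]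
  simp

theorem eigenvalPos_ne_eigenvalNeg {r : ℝ} (hr : r < 1) (k : ℝ) :
    eigenvalPos r k ≠ eigenvalNeg r k := by
  rw [← sub_ne_zero, eigenvalPos_sub_eigenvalNeg]
  exact mul_ne_zero two_ne_zero (Complex.ofReal_ne_zero.2 (cos_eigenphase_pos hr k).ne')

theorem trace_Chat (r k : ℝ) :
    (Chat r k).trace = -2 * Complex.I * (√r * Real.sin k : ℝ) := by
  have hsin : 2 * (Real.sin k : ℂ) =
      (Complex.exp (-Complex.I * k) - Complex.exp (Complex.I * k)) * Complex.I := by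
    rw [Complex.ofReal_sin, Complex.two_sin, mul_comm Complex.I, neg_mul, neg_mul,
      mul_comm Complex.I]
  simp only [Chat, Matrix.trace_fin_two_of, Complex.ofReal_mul]
  linear_combination (Complex.I * √r) * hsin +
    (√r : ℂ) * (Complex.exp (-Complex.I * k) - Complex.exp (Complex.I * k)) * Complex.I_sq

theorem det_Chat {r : ℝ} (h₀ : 0 ≤ r) (h₁ : r ≤ 1) (k : ℝ) : (Chat r k).det = -1 := by
  have hexp : Complex.exp (-Complex.I * k) * Complex.exp (Complex.I * k) = 1 := by
    simp [← Complex.exp_add]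
  have hsqrt : (√r : ℂ) ^ 2 + (√(1 - r) : ℂ) ^ 2 = 1 := by
    norm_cast
    rw [Real.sq_sqrt h₀, Real.sq_sqrt (sub_nonneg.2 h₁), add_sub_cancel]
  rw [Chat, Matrix.det_fin_two_of]
  linear_combination -((√r : ℂ) ^ 2 + (√(1 - r) : ℂ) ^ 2) * hexp - hsqrt

theorem Chat_pow_eq {r : ℝ} (h₀ : 0 ≤ r) (h₁ : r < 1) (k : ℝ) (n : ℕ) :
    Chat r k ^ n =
      eigenvalPos r k ^ n • spectralProj (eigenvalPos r k) (eigenvalNeg r k) (Chat r k) +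
        eigenvalNeg r k ^ n • spectralProj (eigenvalNeg r k) (eigenvalPos r k) (Chat r k) := by
  refine pow_eq_smul_spectralProj_add (eigenvalPos_ne_eigenvalNeg h₁ k)
    (sub_mul_sub_eq_zero_of_trace_of_det ?_ ?_) n
  · rw [trace_Chat, eigenvalPos_add_eigenvalNeg, sin_eigenphase h₁.le]
  · rw [det_Chat h₀ h₁.le, eigenvalPos_mul_eigenvalNeg]

theorem Chat_zero (k : ℝ) : Chat 0 k = Vmat k := by
  simp [Chat, Vmat]

theorem continuous_Chat (k : ℝ) : Continuous fun r => Chat r k := by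
  unfold Chat
  fun_prop

theorem tendsto_eigenvalPos (k : ℝ) : Tendsto (eigenvalPos · k) (𝓝 0) (𝓝 1) := by
  have hcont : Continuous (eigenvalPos · k) := by
    unfold eigenvalPos eigenphase
    fun_prop
  exact hcont.tendsto' 0 1 (by simp [eigenvalPos, eigenphase])

theorem tendsto_eigenvalNeg (k : ℝ) : Tendsto (eigenvalNeg · k) (𝓝 0) (𝓝 (-1)) := by
  have hcont : Continuous (eigenvalNeg · k) := by
    unfold eigenvalNeg eigenphase
    fun_prop
  exact hcont.tendsto' 0 (-1) (by simp [eigenvalNeg, eigenphase])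

section Asymptotics

variable {r : ℕ → ℝ}

theorem tendsto_mul_eigenphase_sub
    (hlim : Tendsto (fun T : ℕ => (T : ℝ) * √(r T) ^ 3) atTop (𝓝 0)) (k : ℝ) :
    Tendsto (fun T : ℕ => T * eigenphase (r T) k - T * √(r T) * Real.sin k) atTop (𝓝 0) := by
  have hbound : (fun T => √(r T) * Real.sin k) =O[atTop] fun T => √(r T) :=
    .of_norm_le fun T => abs_sqrt_mul_sin_le (r T) k
  have hsmall : Tendsto (fun T => √(r T) * Real.sin k) atTop (𝓝 0) :=
    hbound.trans_tendsto (tendsto_zero_of_tendsto_natCast_mul_pow three_ne_zero hlim)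
  have hphase : (fun T => eigenphase (r T) k - √(r T) * Real.sin k) =O[atTop]
      fun T => √(r T) ^ 3 :=
    (arcsin_sub_self_isBigO.comp_tendsto hsmall).trans (hbound.pow 3)
  refine (((Asymptotics.isBigO_refl (fun T : ℕ => (T : ℝ)) atTop).mul hphase).trans_tendsto
    hlim).congr fun T => ?_
  rw [mul_sub, mul_assoc]

theorem tendsto_eigenvalPos_pow_sub
    (hlim : Tendsto (fun T : ℕ => (T : ℝ) * √(r T) ^ 3) atTop (𝓝 0)) (k : ℝ) :
    Tendsto (fun T : ℕ => eigenvalPos (r T) k ^ T -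
      Complex.exp (-Complex.I * ((T : ℝ) * √(r T)) * Real.sin k)) atTop (𝓝 0) := by
  have hneg : Tendsto (fun T : ℕ => -(T * eigenphase (r T) k) - -(T * √(r T) * Real.sin k))
      atTop (𝓝 0) := by
    simpa only [neg_sub_neg, neg_sub, neg_zero] using (tendsto_mul_eigenphase_sub hlim k).neg
  refine (tendsto_exp_I_mul_sub_exp_I_mul hneg).congr fun T => ?_
  rw [eigenvalPos, ← Complex.exp_nat_mul]
  push_cast
  ring_nf

theorem tendsto_eigenvalNeg_pow_sub
    (hlim : Tendsto (fun T : ℕ => (T : ℝ) * √(r T) ^ 3) atTop (𝓝 0)) (k : ℝ) :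
    Tendsto (fun T : ℕ => eigenvalNeg (r T) k ^ T -
      (-1) ^ T * Complex.exp (Complex.I * ((T : ℝ) * √(r T)) * Real.sin k)) atTop (𝓝 0) := by
  have hexp := tendsto_exp_I_mul_sub_exp_I_mul (tendsto_mul_eigenphase_sub hlim k)
  refine squeeze_zero_norm (fun T => le_of_eq ?_) (tendsto_zero_iff_norm_tendsto_zero.1 hexp)
  rw [eigenvalNeg, neg_pow, ← mul_sub, norm_mul, norm_pow, norm_neg, norm_one, one_pow, one_mul,
    ← Complex.exp_nat_mul]
  push_cast
  ring_nf

theorem tendsto_mul_sqrt_pow_of_tendsto_mul (hr : ∀ T, r T ∈ Set.Icc (0 : ℝ) 1)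
    (hlim : Tendsto (fun T : ℕ => (T : ℝ) * r T) atTop (𝓝 0)) :
    Tendsto (fun T : ℕ => (T : ℝ) * √(r T) ^ 3) atTop (𝓝 0) := by
  refine squeeze_zero (fun T => by positivity) (fun T => ?_) hlim
  gcongr
  calc √(r T) ^ 3 ≤ √(r T) ^ 2 :=
        pow_le_pow_of_le_one (Real.sqrt_nonneg _) (Real.sqrt_le_one.2 (hr T).2) (by norm_num)
    _ = r T := Real.sq_sqrt (hr T).1

end Asymptotics

theorem Chat_pow_asymptotics_general (r : ℕ → ℝ) (hr : ∀ T, 0 ≤ r T)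
    (hlim : Tendsto (fun T : ℕ => (T : ℝ) * √(r T) ^ 3) atTop (𝓝 0)) (k : ℝ) :
    Tendsto
      (fun T : ℕ =>
        Chat (r T) k ^ T -
          (1 / 2 : ℂ) •
            (Complex.exp (-Complex.I * ((T : ℝ) * √(r T)) * Real.sin k) • (1 + Vmat k) +
              (-1 : ℂ) ^ T •
                (Complex.exp (Complex.I * ((T : ℝ) * √(r T)) * Real.sin k) • (1 - Vmat k))))
      atTop (𝓝 0) := by
  have hsqrt : Tendsto (fun T => √(r T)) atTop (𝓝 0) :=
    tendsto_zero_of_tendsto_natCast_mul_pow three_ne_zero hlim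
  have hr₀ : Tendsto r atTop (𝓝 0) := by
    simpa [Real.sq_sqrt (hr _)] using hsqrt.pow 2
  have hpos := (tendsto_eigenvalPos k).comp hr₀
  have hneg := (tendsto_eigenvalNeg k).comp hr₀
  have hC : Tendsto (fun T => Chat (r T) k) atTop (𝓝 (Vmat k)) :=
    ((continuous_Chat k).tendsto' 0 _ (Chat_zero k)).comp hr₀
  have hPpos := tendsto_smul_sub_smul_of_norm_le_one
    (.of_forall fun T => by rw [norm_pow, norm_eigenvalPos, one_pow])
    (tendsto_eigenvalPos_pow_sub hlim k) (tendsto_spectralProj (by norm_num) hpos hneg hC)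
  have hPneg := tendsto_smul_sub_smul_of_norm_le_one
    (.of_forall fun T => by rw [norm_pow, norm_eigenvalNeg, one_pow])
    (tendsto_eigenvalNeg_pow_sub hlim k) (tendsto_spectralProj (by norm_num) hneg hpos hC)
  have hsum := hPpos.add hPneg
  rw [add_zero] at hsum
  refine hsum.congr' ?_
  filter_upwards [hr₀.eventually_lt_const one_pos] with T hT
  rw [Chat_pow_eq (hr T) hT, spectralProj_one_neg_one, spectralProj_neg_one_one]
  simp only [Function.comp_apply]
  module

/-- If `T·r(T) → 0`, then `Ĉ_{r(T)}(k)^T` is entrywise asymptotic to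
`(1/2)[e^{-i t_T sin k}(I + V(k)) + (-1)^T e^{i t_T sin k}(I - V(k))]`
with `t_T = T √(r(T))`. -/
theorem Chat_pow_asymptotics (r : ℕ → ℝ) (hr : ∀ T : ℕ, r T ∈ Set.Ioo (0 : ℝ) 1)
    (hlim : Tendsto (fun T : ℕ => (T : ℝ) * r T) atTop (𝓝 0)) (k : ℝ) :
    ∀ i j : Fin 2,
      Tendsto
        (fun T : ℕ =>
          ((Chat (r T) k) ^ T -
            (1 / 2 : ℂ) •
              (Complex.exp (-Complex.I * ((T : ℝ) * Real.sqrt (r T)) * Real.sin k) •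
                  (1 + Vmat k) +
                (-1 : ℂ) ^ T •
                  (Complex.exp (Complex.I * ((T : ℝ) * Real.sqrt (r T)) * Real.sin k) •
                    (1 - Vmat k)))) i j)
        atTop (𝓝 0) :=
  fun i j => ((continuous_id.matrix_elem i j).tendsto' 0 0 rfl).comp <|
    Chat_pow_asymptotics_general r (fun T => (hr T).1.le)
      (tendsto_mul_sqrt_pow_of_tendsto_mul (fun T => Set.Ioo_subset_Icc_self (hr T)) hlim) k
end
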